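/- Let n ≥ 1 be an integer and A > 0 a real constant. For every ε > 0 there exists a constant C = C(n, A, ε) such that the following holds for all real H ≥ 2: for every integer Q_0 and all nonzero integers Q_1, …, Q_n with |Q_i| ≤ H^A for i = 1, …, n, the number of n-tuples (x_1, …, x_n) of nonzero integers with |x_i| ≤ H for all i satisfying Σ_{i=1}^n Q_i/x_i = Q_0 is at most C·H^{n/2+ε}. -/

import Mathlib

/-!
Reduce each fraction `Q i / x i` to lowest terms. Since the sum is an integer, every reduced
denominator divides the least common multiple of the others, so each prime attains its maximal
exponent in at least two of the denominators. Hence their least common multiple `L` satisfies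
`L ^ 2 ∣ ∏ i, x i`, which leaves at most `H ^ (n / 2)` values for `L`. Once `L` is fixed, each `x i`
is a divisor of the nonzero integer `Q i * L`, and the divisor bound `d(m) = O(m ^ ε)` leaves
`H ^ o(1)` choices.
-/

open Finset

section DivisorBound

lemma natCast_add_one_le_mul_pow {y : ℝ} (hy : 1 < y) (k : ℕ) :
    (k + 1 : ℝ) ≤ y / (y - 1) * y ^ k := by
  have hy' : 0 < y - 1 := sub_pos.mpr hy
  calc (k + 1 : ℝ) ≤ k * y + y / (y - 1) := by
        gcongr
        · exact le_mul_of_one_le_right k.cast_nonneg hy.le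
        · exact (one_le_div hy').mpr (by linarith)
    _ = y / (y - 1) * (1 + k * (y - 1)) := by field_simp; ring
    _ ≤ y / (y - 1) * y ^ k := by
        gcongr
        exact one_add_mul_sub_le_pow (by linarith) k

lemma natCast_add_one_le_pow {y : ℝ} (hy : 2 ≤ y) (k : ℕ) : (k + 1 : ℝ) ≤ y ^ k :=
  calc (k + 1 : ℝ) ≤ 2 ^ k := mod_cast k.lt_two_pow_self
    _ ≤ y ^ k := by gcongr

lemma natCast_rpow_eq_prod_primeFactors {m : ℕ} (hm : m ≠ 0) (δ : ℝ) :
    (m : ℝ) ^ δ = ∏ p ∈ m.primeFactors, ((p : ℝ) ^ δ) ^ m.factorization p := by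
  conv_lhs => rw [Nat.prod_primeFactors_pow_factorization hm]
  push_cast
  rw [← Real.finsetProd_rpow _ _ fun p _ => by positivity]
  exact prod_congr rfl fun p _ => (Real.rpow_pow_comm p.cast_nonneg δ _).symm

lemma natCast_add_one_le_ite_mul_rpow_pow {δ : ℝ} (hδ : 0 < δ) {p : ℕ} (hp : 2 ≤ p) (k : ℕ) :
    (k + 1 : ℝ) ≤
      (if p < ⌈(2 : ℝ) ^ δ⁻¹⌉₊ then (2 : ℝ) ^ δ / (2 ^ δ - 1) else 1) * ((p : ℝ) ^ δ) ^ k := by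
  have two_rpow : 1 < (2 : ℝ) ^ δ := Real.one_lt_rpow one_lt_two hδ
  split_ifs with hlt
  · calc (k + 1 : ℝ) ≤ 2 ^ δ / (2 ^ δ - 1) * ((2 : ℝ) ^ δ) ^ k :=
          natCast_add_one_le_mul_pow two_rpow k
      _ ≤ 2 ^ δ / (2 ^ δ - 1) * ((p : ℝ) ^ δ) ^ k := by
          have := sub_pos.mpr two_rpow
          gcongr
          exact_mod_cast hp
  · have two_le : (2 : ℝ) ≤ (p : ℝ) ^ δ :=
      (Real.rpow_inv_le_iff_of_pos zero_le_two p.cast_nonneg hδ).mp (Nat.ceil_le.mp (not_lt.mp hlt))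
    simpa only [one_mul] using natCast_add_one_le_pow two_le k

-- Only the finitely many primes `p < 2 ^ (1 / δ)` contribute to the constant.
theorem exists_card_divisors_le_mul_rpow {δ : ℝ} (hδ : 0 < δ) :
    ∃ C > 0, ∀ m : ℕ, (#m.divisors : ℝ) ≤ C * (m : ℝ) ^ δ := by
  set K : ℝ := 2 ^ δ / (2 ^ δ - 1)
  set N : ℕ := ⌈(2 : ℝ) ^ δ⁻¹⌉₊
  have one_le_K : 1 ≤ K :=
    (one_le_div (sub_pos.mpr (Real.one_lt_rpow one_lt_two hδ))).mpr (by linarith)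
  refine ⟨K ^ N, by positivity, fun m => ?_⟩
  rcases eq_or_ne m 0 with rfl | hm
  · simp [hδ.ne']
  have card_le : #{p ∈ m.primeFactors | p < N} ≤ N :=
    calc #{p ∈ m.primeFactors | p < N} ≤ #(range N) :=
          card_le_card fun p hp => mem_range.mpr (mem_filter.mp hp).2
      _ = N := card_range N
  calc (#m.divisors : ℝ) = ∏ p ∈ m.primeFactors, (m.factorization p + 1 : ℝ) := by
        exact_mod_cast Nat.card_divisors hm
    _ ≤ ∏ p ∈ m.primeFactors, (if p < N then K else 1) * ((p : ℝ) ^ δ) ^ m.factorization p :=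
        prod_le_prod (fun p _ => by positivity) fun p hp =>
          natCast_add_one_le_ite_mul_rpow_pow hδ (Nat.prime_of_mem_primeFactors hp).two_le _
    _ = K ^ #{p ∈ m.primeFactors | p < N} * (m : ℝ) ^ δ := by
        rw [prod_mul_distrib, ← prod_filter, prod_const, natCast_rpow_eq_prod_primeFactors hm]
    _ ≤ K ^ N * (m : ℝ) ^ δ :=
        mul_le_mul_of_nonneg_right (pow_le_pow_right₀ one_le_K card_le) (by positivity)

lemma card_intDivisors (z : ℤ) : #z.divisors = 2 * #z.natAbs.divisors := by
  rw [Int.divisors, card_disjUnion, card_map, card_map, two_mul]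

end DivisorBound

section Denominators

variable {ι : Type*}

lemma two_mul_sup_le_sum_of_le_sup_erase [DecidableEq ι] {s : Finset ι} {v : ι → ℕ}
    (h : ∀ i ∈ s, v i ≤ (s.erase i).sup v) : 2 * s.sup v ≤ ∑ i ∈ s, v i := by
  rcases s.eq_empty_or_nonempty with rfl | hs
  · simp
  obtain ⟨i, hi, sup_eq⟩ := exists_mem_eq_sup s hs v
  calc 2 * s.sup v = v i + v i := by rw [sup_eq, two_mul]
    _ ≤ v i + ∑ j ∈ s.erase i, v j := by
        gcongr
        exact (h i hi).trans (Finset.sup_le fun j hj => single_le_sum_of_canonicallyOrdered hj)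
    _ = ∑ j ∈ s, v j := add_sum_erase s v hi

lemma sq_lcm_dvd_prod_of_dvd_lcm_erase [DecidableEq ι] {s : Finset ι} {a : ι → ℕ}
    (h : ∀ i ∈ s, a i ∣ (s.erase i).lcm a) : (s.lcm a) ^ 2 ∣ ∏ i ∈ s, a i := by
  by_cases ha : ∃ i ∈ s, a i = 0
  · simp [prod_eq_zero_iff.mpr ha]
  push Not at ha
  have lcm_ne_zero {t : Finset ι} (ht : t ⊆ s) : t.lcm a ≠ 0 := by
    simpa [Finset.lcm_eq_zero_iff] using fun i hi => ha i (ht hi)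
  have prod_ne_zero : ∏ i ∈ s, a i ≠ 0 := prod_ne_zero_iff.mpr ha
  rw [← Nat.factorization_le_iff_dvd (pow_ne_zero 2 (lcm_ne_zero subset_rfl)) prod_ne_zero]
  intro p
  rw [Nat.factorization_pow, Finsupp.smul_apply, smul_eq_mul, factorization_lcm ha,
    Nat.factorization_prod_apply ha]
  refine two_mul_sup_le_sum_of_le_sup_erase fun i hi => ?_
  rw [← factorization_lcm fun j hj => ha j (mem_of_mem_erase hj)]
  have erase_ne_zero := lcm_ne_zero (erase_subset i s)
  exact (Nat.factorization_le_iff_dvd (ha i hi) erase_ne_zero).mpr (h i hi) p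

lemma den_dvd_lcm_erase_den [DecidableEq ι] {s : Finset ι} {r : ι → ℚ} {m : ℤ}
    (h : ∑ i ∈ s, r i = m) {i : ι} (hi : i ∈ s) :
    (r i).den ∣ (s.erase i).lcm fun j => (r j).den := by
  have eq_sub : r i = m - ∑ j ∈ s.erase i, r j := by
    rw [← h, ← add_sum_erase s r hi, add_sub_cancel_right]
  rw [eq_sub, Rat.intCast_sub_den]
  exact Finset.Rat.den_sum_dvd_lcm_den _ _

lemma dvd_mul_of_den_div_dvd {a b : ℤ} (hb : b ≠ 0) {L : ℕ} (h : ((a : ℚ) / b).den ∣ L) :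
    b ∣ a * L := by
  have cross : a * ((a : ℚ) / b).den = b * ((a : ℚ) / b).num := by
    have num_den := Rat.num_div_den ((a : ℚ) / b)
    field_simp at num_den
    exact_mod_cast num_den.symm
  exact (Dvd.intro _ cross.symm).trans (mul_dvd_mul_left a (Int.natCast_dvd_natCast.mpr h))

theorem exists_sq_dvd_prod_and_dvd_mul {s : Finset ι} {Q x : ι → ℤ} {Q₀ : ℤ}
    (hx : ∀ i ∈ s, x i ≠ 0) (hsum : ∑ i ∈ s, (Q i : ℚ) / x i = Q₀) :
    ∃ L : ℕ, (L : ℤ) ^ 2 ∣ ∏ i ∈ s, x i ∧ ∀ i ∈ s, x i ∣ Q i * L := by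
  classical
  set z : ι → ℕ := fun i => ((Q i : ℚ) / x i).den
  have den_dvd (i : ι) : (z i : ℤ) ∣ x i := by
    simpa only [z, Rat.intCast_div_eq_divInt] using Rat.den_dvd (Q i) (x i)
  refine ⟨s.lcm z, ?_, fun i hi => dvd_mul_of_den_div_dvd (hx i hi) (dvd_lcm hi)⟩
  have sq_lcm_dvd : s.lcm z ^ 2 ∣ ∏ i ∈ s, z i :=
    sq_lcm_dvd_prod_of_dvd_lcm_erase fun i hi => den_dvd_lcm_erase_den hsum hi
  calc ((s.lcm z : ℕ) : ℤ) ^ 2 ∣ ∏ i ∈ s, (z i : ℤ) := by exact_mod_cast sq_lcm_dvd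
    _ ∣ ∏ i ∈ s, x i := prod_dvd_prod_of_dvd _ _ fun i _ => den_dvd i

end Denominators

section Counting

variable {ι : Type*} [Fintype ι]

/-- The solutions of `∑ i, Q i / x i = Q₀` in nonzero integers with `∏ i, |x i| ≤ B`. The theorem
concerns the box `|x i| ≤ H`, which lies in this region for `B = H ^ n`; only the size of the
product matters for the count. -/
def unitFractionSolutions (Q₀ : ℤ) (Q : ι → ℤ) (B : ℝ) : Set (ι → ℤ) :=
  {x | (∀ i, x i ≠ 0) ∧ ∏ i, (|x i| : ℝ) ≤ B ∧ ∑ i, (Q i : ℚ) / x i = Q₀}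

/-- The tuples `x` such that, for some positive `L ≤ N`, every `x i` divides the nonzero integer
`Q i * L`; here `L` plays the role of the common denominator of the fractions `Q i / x i`. -/
def divisorTuples [DecidableEq ι] (Q : ι → ℤ) (N : ℕ) : Finset (ι → ℤ) :=
  (Icc 1 N).biUnion fun L => Fintype.piFinset fun i => (Q i * L).divisors

lemma unitFractionSolutions_subset_divisorTuples [DecidableEq ι] {Q₀ : ℤ} {Q : ι → ℤ}
    (hQ : ∀ i, Q i ≠ 0) (B : ℝ) :
    unitFractionSolutions Q₀ Q B ⊆ divisorTuples Q ⌊√B⌋₊ := by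
  rintro x ⟨hx, hxB, hsum⟩
  obtain ⟨L, sq_dvd, dvd_mul⟩ := exists_sq_dvd_prod_and_dvd_mul (fun i _ => hx i) hsum
  have prod_ne_zero : ∏ i, x i ≠ 0 := prod_ne_zero_iff.mpr fun i _ => hx i
  have L_ne_zero : L ≠ 0 := by
    rintro rfl
    exact prod_ne_zero (zero_dvd_iff.mp (by simpa using sq_dvd))
  have sq_le_prod : (L : ℤ) ^ 2 ≤ ∏ i, |x i| :=
    abs_prod univ x ▸ Int.le_of_dvd (abs_pos.mpr prod_ne_zero) ((dvd_abs _ _).mpr sq_dvd)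
  have sq_le : (L : ℝ) ^ 2 ≤ B := le_trans (mod_cast sq_le_prod) hxB
  simp only [divisorTuples, coe_biUnion, Set.mem_iUnion, mem_coe, Fintype.mem_piFinset,
    Int.mem_divisors, mem_Icc]
  exact ⟨L, ⟨Nat.one_le_iff_ne_zero.mpr L_ne_zero, Nat.le_floor (Real.le_sqrt_of_sq_le sq_le)⟩,
    fun i => ⟨dvd_mul i (mem_univ i), mul_ne_zero (hQ i) (mod_cast L_ne_zero)⟩⟩

lemma unitFractionSolutions_finite (Q₀ : ℤ) {Q : ι → ℤ} (hQ : ∀ i, Q i ≠ 0) (B : ℝ) :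
    (unitFractionSolutions Q₀ Q B).Finite := by
  classical exact (finite_toSet _).subset (unitFractionSolutions_subset_divisorTuples hQ B)

lemma card_divisorTuples_le [DecidableEq ι] (Q : ι → ℤ) {C δ : ℝ} (hC : 0 ≤ C) (hδ : 0 ≤ δ)
    (hcard : ∀ m : ℕ, (#m.divisors : ℝ) ≤ C * (m : ℝ) ^ δ) (N : ℕ) :
    (#(divisorTuples Q N) : ℝ) ≤
      N * ((2 * C) ^ Fintype.card ι * ((N : ℝ) ^ Fintype.card ι * ∏ i, (|Q i| : ℝ)) ^ δ) := by
  have card_factor_le (i : ι) (L : ℕ) (hL : L ≤ N) :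
      (#(Q i * L).divisors : ℝ) ≤ 2 * C * (N * |(Q i : ℝ)|) ^ δ := by
    have natAbs_le : ((Q i * L).natAbs : ℝ) ≤ N * |(Q i : ℝ)| := by
      rw [Int.natAbs_mul, Int.natAbs_natCast, Nat.cast_mul, Nat.cast_natAbs, Int.cast_abs,
        mul_comm]
      gcongr
    rw [card_intDivisors, Nat.cast_mul, Nat.cast_two, mul_assoc]
    gcongr
    exact (hcard _).trans (by gcongr)
  calc (#(divisorTuples Q N) : ℝ)
      ≤ ∑ L ∈ Icc 1 N, ∏ i, (#(Q i * L).divisors : ℝ) := by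
        have := card_biUnion_le (s := Icc 1 N)
          (t := fun L : ℕ => Fintype.piFinset fun i => (Q i * L).divisors)
        simp only [Fintype.card_piFinset] at this
        exact_mod_cast this
    _ ≤ ∑ L ∈ Icc 1 N, ∏ i, 2 * C * (N * |(Q i : ℝ)|) ^ δ := by
        gcongr with L hL i
        exact card_factor_le i L (mem_Icc.mp hL).2
    _ = N * ((2 * C) ^ Fintype.card ι * ((N : ℝ) ^ Fintype.card ι * ∏ i, (|Q i| : ℝ)) ^ δ) := by
        rw [sum_const, Nat.card_Icc, Nat.add_sub_cancel, nsmul_eq_mul, prod_mul_distrib,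
          prod_const, Real.finsetProd_rpow _ _ fun i _ => by positivity, prod_mul_distrib,
          prod_const, card_univ]

theorem stmt17_general (ι : Type*) [Fintype ι] {δ : ℝ} (hδ : 0 < δ) :
    ∃ C ≥ 0, ∀ (Q₀ : ℤ) (Q : ι → ℤ), (∀ i, Q i ≠ 0) → ∀ B : ℝ,
      ((unitFractionSolutions Q₀ Q B).ncard : ℝ) ≤
        C * (√B * (√B ^ Fintype.card ι * ∏ i, (|Q i| : ℝ)) ^ δ) := by
  classical
  obtain ⟨c, hc, card_le⟩ := exists_card_divisors_le_mul_rpow hδ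
  refine ⟨(2 * c) ^ Fintype.card ι, by positivity, fun Q₀ Q hQ B => ?_⟩
  have floor_le : (⌊√B⌋₊ : ℝ) ≤ √B := Nat.floor_le (Real.sqrt_nonneg B)
  have ncard_le : (unitFractionSolutions Q₀ Q B).ncard ≤ #(divisorTuples Q ⌊√B⌋₊) :=
    Set.ncard_coe_finset (divisorTuples Q ⌊√B⌋₊) ▸
      Set.ncard_le_ncard (unitFractionSolutions_subset_divisorTuples hQ B) (finite_toSet _)
  calc ((unitFractionSolutions Q₀ Q B).ncard : ℝ) ≤ #(divisorTuples Q ⌊√B⌋₊) :=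
        mod_cast ncard_le
    _ ≤ _ := card_divisorTuples_le Q hc.le hδ.le card_le _
    _ ≤ √B * ((2 * c) ^ Fintype.card ι * (√B ^ Fintype.card ι * ∏ i, (|Q i| : ℝ)) ^ δ) := by
        gcongr
    _ = _ := mul_left_comm _ _ _

lemma prod_le_pow_card_of_nonneg {f : ι → ℝ} {b : ℝ} (hf : ∀ i, 0 ≤ f i) (hb : ∀ i, f i ≤ b) :
    ∏ i, f i ≤ b ^ Fintype.card ι :=
  (prod_le_prod (fun i _ => hf i) fun i _ => hb i).trans_eq (by rw [prod_const, card_univ])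

lemma ncard_box_le_ncard_unitFractionSolutions (Q₀ : ℤ) {Q : ι → ℤ} (hQ : ∀ i, Q i ≠ 0) (H : ℝ) :
    {x : ι → ℤ | (∀ i, x i ≠ 0 ∧ (|x i| : ℝ) ≤ H) ∧ ∑ i, (Q i : ℚ) / x i = Q₀}.ncard ≤
      (unitFractionSolutions Q₀ Q (H ^ Fintype.card ι)).ncard := by
  refine Set.ncard_le_ncard ?_ (unitFractionSolutions_finite Q₀ hQ _)
  rintro x ⟨hx, hsum⟩
  exact ⟨fun i => (hx i).1, prod_le_pow_card_of_nonneg (fun i => abs_nonneg _) fun i => (hx i).2,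
    hsum⟩

end Counting

lemma sqrt_pow_mul_rpow_le_rpow {n : ℕ} (hn : 0 < n) {H A ε P : ℝ} (hH : 0 < H) (hA : 0 < A)
    (hε : 0 ≤ ε) (hP : 0 ≤ P) (hPA : P ≤ (H ^ A) ^ n) :
    √(H ^ n) * (√(H ^ n) ^ n * P) ^ (ε / (n * (n / 2 + A))) ≤ H ^ ((n : ℝ) / 2 + ε) := by
  have sqrt_eq : √(H ^ n) = H ^ ((n : ℝ) / 2) := by
    rw [Real.sqrt_eq_rpow, ← Real.rpow_natCast_mul hH.le, mul_one_div]
  calc √(H ^ n) * (√(H ^ n) ^ n * P) ^ (ε / (n * (n / 2 + A)))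
      ≤ √(H ^ n) * (√(H ^ n) ^ n * (H ^ A) ^ n) ^ (ε / (n * (n / 2 + A))) := by gcongr
    _ = H ^ ((n : ℝ) / 2) * H ^ ε := by
        rw [sqrt_eq, ← mul_pow, ← Real.rpow_add hH, ← Real.rpow_mul_natCast hH.le,
          ← Real.rpow_mul hH.le]
        congr 2
        field_simp
    _ = H ^ ((n : ℝ) / 2 + ε) := (Real.rpow_add hH _ _).symm

theorem stmt17 (n : ℕ) (hn : 1 ≤ n) (A : ℝ) (hA : A > 0) :
    ∀ ε > (0 : ℝ), ∃ C : ℝ, ∀ H : ℝ, H ≥ 2 →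
      ∀ Q₀ : ℤ, ∀ Q : Fin n → ℤ,
      (∀ i, Q i ≠ 0) → (∀ i, (|Q i| : ℝ) ≤ H ^ A) →
      (Set.ncard {x : Fin n → ℤ |
          (∀ i, x i ≠ 0 ∧ (|x i| : ℝ) ≤ H) ∧
          ∑ i, (Q i : ℚ) / (x i : ℚ) = (Q₀ : ℚ)} : ℝ) ≤
        C * H ^ ((n : ℝ) / 2 + ε) := by
  intro ε hε
  obtain ⟨C, hC, bound⟩ := stmt17_general (Fin n) (δ := ε / (n * (n / 2 + A))) (by positivity)
  refine ⟨C, fun H hH Q₀ Q hQ₀ hQ => ?_⟩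
  have box_le := ncard_box_le_ncard_unitFractionSolutions Q₀ hQ₀ H
  have prod_le := prod_le_pow_card_of_nonneg (fun i => abs_nonneg (Q i : ℝ)) hQ
  simp only [Fintype.card_fin] at bound box_le prod_le
  calc _ ≤ ((unitFractionSolutions Q₀ Q (H ^ n)).ncard : ℝ) := mod_cast box_le
    _ ≤ C * (√(H ^ n) * (√(H ^ n) ^ n * ∏ i, (|Q i| : ℝ)) ^ (ε / (n * (n / 2 + A)))) :=
        bound Q₀ Q hQ₀ _
    _ ≤ C * H ^ ((n : ℝ) / 2 + ε) := by
        gcongr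
        exact sqrt_pow_mul_rpow_le_rpow hn (zero_lt_two.trans_le hH) hA hε.le
          (prod_nonneg fun i _ => abs_nonneg _) prod_le
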